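/- There exists a finite Stackelberg game (u_l, u_f) with m = 3 leader actions, n = 2 follower actions, utilities in [0,1], and inducibility gap Δ > 0, such that the function δ ↦ u_RSE(δ) restricted to the interval (0, Δ) is neither convex nor concave. -/

import Mathlib

open Finset Set

noncomputable section

/-- The simplex of mixed strategies over `m` actions. -/
def simplex (m : ℕ) : Set (Fin m → ℝ) := stdSimplex ℝ (Fin m)

/-- Mixed-strategy extension of a utility matrix: `u(x, j) = ∑ i, x i * u i j`. -/
def mixU {m n : ℕ} (u : Fin m → Fin n → ℝ) (x : Fin m → ℝ) (j : Fin n) : ℝ :=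
  ∑ i, x i * u i j

/-- The follower's δ-optimal response set (strict inequality):
`BR_δ(x) = {j : u_f(x,j) > max_{j'} u_f(x,j') - δ}`. -/
def BRd {m n : ℕ} (uf : Fin m → Fin n → ℝ) (δ : ℝ) (x : Fin m → ℝ) : Set (Fin n) :=
  {j | mixU uf x j > (⨆ j', mixU uf x j') - δ}

/-- The follower's exact best-response set. -/
def BR0 {m n : ℕ} (uf : Fin m → Fin n → ℝ) (x : Fin m → ℝ) : Set (Fin n) :=
  {j | mixU uf x j = ⨆ j', mixU uf x j'}

/-- Worst-case leader utility over the follower's δ-optimal response set: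
`min_{j ∈ BR_δ(x)} u_l(x, j)`. -/
def valBR {m n : ℕ} (ul uf : Fin m → Fin n → ℝ) (δ : ℝ) (x : Fin m → ℝ) : ℝ :=
  sInf (mixU ul x '' BRd uf δ x)

/-- The δ-RSE leader utility `u_RSE(δ) = sup_{x ∈ Δ^m} min_{j ∈ BR_δ(x)} u_l(x, j)`. -/
def uRSE {m n : ℕ} (ul uf : Fin m → Fin n → ℝ) (δ : ℝ) : ℝ :=
  sSup (valBR ul uf δ '' simplex m)

/-- The SSE leader utility `u_SSE = sup_{x ∈ Δ^m} max_{j ∈ BR_0(x)} u_l(x, j)`. -/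
def uSSE {m n : ℕ} (ul uf : Fin m → Fin n → ℝ) : ℝ :=
  sSup ((fun x => sSup (mixU ul x '' BR0 uf x)) '' simplex m)

/-- The maximin leader utility `u_MM = sup_{x ∈ Δ^m} min_{j ∈ [n]} u_l(x, j)`. -/
def uMM {m n : ℕ} (ul : Fin m → Fin n → ℝ) : ℝ :=
  sSup ((fun x => ⨅ j, mixU ul x j) '' simplex m)

/-- The inducibility gap
`Δ = min_{j} sup_{x ∈ Δ^m} min_{j' ≠ j} (u_f(x, j) - u_f(x, j'))`. -/
def indGap {m n : ℕ} (uf : Fin m → Fin n → ℝ) : ℝ :=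
  ⨅ j, sSup ((fun x => ⨅ j' : {k : Fin n // k ≠ j}, (mixU uf x j - mixU uf x j'.1)) '' simplex m)

/-!
In the game below the leader earns `x 1` from follower action `0`, and always `1 / 2` from action
`1`. To do better than `1 / 2` she must make action `0` the only `δ`-optimal response, that is,
keep the follower's margin `x 0 + x 1 / 2 - x 2` at least `δ`. The pure strategy `x 1 = 1` has
margin `1 / 2`; beyond that, the best choice has `x 2 = 0` and margin `1 - x 1 / 2 = δ`. Hence
`u_RSE(δ) = max (1/2) (min 1 (2 - 2δ))`, which violates midpoint convexity at `δ = 1/2` and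
midpoint concavity at `δ = 3/4`.
-/

section Game

variable {m n : ℕ} {ul uf : Fin m → Fin n → ℝ} {δ c : ℝ} {x : Fin m → ℝ}

lemma mixU_single (u : Fin m → Fin n → ℝ) (i : Fin m) (j : Fin n) :
    mixU u (Pi.single i 1) j = u i j := by
  simp [mixU, Pi.single_apply]

lemma continuous_mixU (u : Fin m → Fin n → ℝ) (j : Fin n) : Continuous fun x => mixU u x j := by
  unfold mixU
  fun_prop

lemma mem_BRd_iff {j : Fin n} : j ∈ BRd uf δ x ↔ ∀ k, mixU uf x k - mixU uf x j < δ := by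
  have : Nonempty (Fin n) := ⟨j⟩
  obtain ⟨k₀, hk₀⟩ := exists_eq_ciSup_of_finite (f := mixU uf x)
  have le_max (k : Fin n) : mixU uf x k ≤ mixU uf x k₀ :=
    hk₀ ▸ le_ciSup (Set.finite_range (mixU uf x)).bddAbove k
  change (⨆ k, mixU uf x k) - δ < mixU uf x j ↔ _
  rw [← hk₀, sub_lt_comm]
  exact ⟨fun h k => by linarith [le_max k], fun h => h k₀⟩

lemma BRd_nonempty [NeZero n] (hδ : 0 < δ) : (BRd uf δ x).Nonempty := by
  obtain ⟨j, hj⟩ := Finite.exists_max (mixU uf x)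
  exact ⟨j, mem_BRd_iff.2 fun k => (sub_nonpos.2 (hj k)).trans_lt hδ⟩

lemma exists_mixU_eq_valBR [NeZero n] (hδ : 0 < δ) :
    ∃ j ∈ BRd uf δ x, mixU ul x j = valBR ul uf δ x :=
  ((BRd_nonempty hδ).image _).csInf_mem (Set.toFinite _)

lemma valBR_le_mixU {j : Fin n} (hj : j ∈ BRd uf δ x) : valBR ul uf δ x ≤ mixU ul x j :=
  csInf_le (Set.toFinite _).bddBelow (Set.mem_image_of_mem _ hj)

lemma bddAbove_valBR [NeZero n] (hδ : 0 < δ) : BddAbove (valBR ul uf δ '' simplex m) := by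
  have bdd_mixU (j : Fin n) : BddAbove ((fun x => mixU ul x j) '' simplex m) :=
    (isCompact_stdSimplex ℝ (Fin m)).bddAbove_image (continuous_mixU ul j).continuousOn
  refine ((Set.finite_univ.bddAbove_biUnion).2 fun j _ => bdd_mixU j).mono ?_
  rintro _ ⟨x, hx, rfl⟩
  obtain ⟨j, -, hj⟩ := exists_mixU_eq_valBR (ul := ul) (uf := uf) (x := x) hδ
  exact Set.mem_biUnion (Set.mem_univ j) ⟨x, hx, hj⟩

lemma le_uRSE [NeZero n] (hδ : 0 < δ) (hx : x ∈ simplex m)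
    (h : ∀ j ∈ BRd uf δ x, c ≤ mixU ul x j) : c ≤ uRSE ul uf δ := by
  obtain ⟨j, hj, hval⟩ := exists_mixU_eq_valBR (ul := ul) (uf := uf) (x := x) hδ
  exact (hval ▸ h j hj).trans (le_csSup (bddAbove_valBR hδ) (Set.mem_image_of_mem _ hx))

lemma uRSE_le [NeZero m] (h : ∀ x ∈ simplex m, ∃ j ∈ BRd uf δ x, mixU ul x j ≤ c) :
    uRSE ul uf δ ≤ c := by
  refine csSup_le (Set.Nonempty.image _ ⟨_, single_mem_stdSimplex ℝ 0⟩) ?_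
  rintro _ ⟨x, hx, rfl⟩
  obtain ⟨j, hj, hjc⟩ := h x hx
  exact (valBR_le_mixU hj).trans hjc

lemma le_indGap [Nontrivial (Fin n)]
    (h : ∀ j, ∃ x ∈ simplex m, ∀ k ≠ j, c ≤ mixU uf x j - mixU uf x k) : c ≤ indGap uf := by
  have : Nonempty (Fin n) := Nontrivial.to_nonempty
  refine le_ciInf fun j => ?_
  obtain ⟨k, hk⟩ := exists_ne j
  have : Nonempty {k : Fin n // k ≠ j} := ⟨⟨k, hk⟩⟩
  obtain ⟨x, hx, hxj⟩ := h j
  have bdd : BddAbove ((fun x => mixU uf x j - mixU uf x k) '' simplex m) :=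
    (isCompact_stdSimplex ℝ (Fin m)).bddAbove_image
      ((continuous_mixU uf j).sub (continuous_mixU uf k)).continuousOn
  refine (le_ciInf fun l : {k // k ≠ j} => hxj l l.2).trans (le_csSup ?_ ⟨x, hx, rfl⟩)
  obtain ⟨b, hb⟩ := bdd
  refine ⟨b, ?_⟩
  rintro _ ⟨y, hy, rfl⟩
  exact (ciInf_le (Set.finite_range _).bddBelow ⟨k, hk⟩).trans (hb ⟨y, hy, rfl⟩)

end Game

section Midpoint

variable {E : Type*} [AddCommGroup E] [Module ℝ E] {s : Set E} {f : E → ℝ} {a b : E}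

lemma not_convexOn_of_lt_midpoint (ha : a ∈ s) (hb : b ∈ s)
    (h : (f a + f b) / 2 < f (midpoint ℝ a b)) : ¬ ConvexOn ℝ s f := by
  intro hf
  have hmid := hf.2 ha hb one_half_pos.le one_half_pos.le (add_halves 1)
  rw [← smul_add, ← smul_add, one_div, ← invOf_eq_inv, ← midpoint_eq_smul_add, smul_eq_mul,
    invOf_eq_inv, inv_mul_eq_div] at hmid
  exact hmid.not_gt h

lemma not_concaveOn_of_midpoint_lt (ha : a ∈ s) (hb : b ∈ s)
    (h : f (midpoint ℝ a b) < (f a + f b) / 2) : ¬ ConcaveOn ℝ s f := by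
  rw [← neg_convexOn_iff]
  refine not_convexOn_of_lt_midpoint ha hb ?_
  simp only [Pi.neg_apply]
  linarith

end Midpoint

/-- Leader utilities of the `3 × 2` game in which `u_RSE` has both a concave and a convex kink. -/
def rampLeader : Fin 3 → Fin 2 → ℝ := ![![0, 1 / 2], ![1, 1 / 2], ![0, 1 / 2]]

/-- Follower utilities of the game with leader utilities `rampLeader`. Action `0` beats action `1`
by the margin `x 0 + x 1 / 2 - x 2`. -/
def rampFollower : Fin 3 → Fin 2 → ℝ := ![![1, 0], ![1 / 2, 0], ![0, 1]]

section Ramp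

variable {δ : ℝ} {x : Fin 3 → ℝ}

lemma rampLeader_mem_Icc (i : Fin 3) (j : Fin 2) : rampLeader i j ∈ Set.Icc (0 : ℝ) 1 := by
  fin_cases i <;> fin_cases j <;> norm_num [rampLeader]

lemma rampFollower_mem_Icc (i : Fin 3) (j : Fin 2) : rampFollower i j ∈ Set.Icc (0 : ℝ) 1 := by
  fin_cases i <;> fin_cases j <;> norm_num [rampFollower]

lemma one_le_indGap_rampFollower : 1 ≤ indGap rampFollower := by
  refine le_indGap (Fin.forall_fin_two.2 ⟨?_, ?_⟩)
  · refine ⟨_, single_mem_stdSimplex ℝ 0, ?_⟩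
    simp [Fin.forall_fin_two, mixU_single, rampFollower]
  · refine ⟨_, single_mem_stdSimplex ℝ 2, ?_⟩
    simp [Fin.forall_fin_two, mixU_single, rampFollower]

lemma mixU_rampLeader_zero : mixU rampLeader x 0 = x 1 := by
  simp [mixU, rampLeader, Fin.sum_univ_three]

lemma mixU_rampLeader_one (hx : x ∈ simplex 3) : mixU rampLeader x 1 = 1 / 2 := by
  have : mixU rampLeader x 1 = (∑ i, x i) * (1 / 2) := by
    simp [mixU, rampLeader, Fin.sum_univ_three, add_mul]
  rw [this, hx.2, one_mul]

lemma one_mem_BRd_rampFollower (hδ : 0 < δ) :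
    1 ∈ BRd rampFollower δ x ↔ x 0 + x 1 / 2 - x 2 < δ := by
  simp [mem_BRd_iff, Fin.forall_fin_two, mixU, rampFollower, Fin.sum_univ_three, hδ, div_eq_mul_inv]

lemma uRSE_ramp_le (hδ : 0 < δ) :
    uRSE rampLeader rampFollower δ ≤ max (1 / 2) (min 1 (2 - 2 * δ)) := by
  refine uRSE_le fun x hx => ?_
  by_cases h : 1 ∈ BRd rampFollower δ x
  · exact ⟨1, h, (mixU_rampLeader_one hx).trans_le (le_max_left _ _)⟩
  · have zero_mem : 0 ∈ BRd rampFollower δ x := by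
      obtain ⟨j, hj⟩ := BRd_nonempty (uf := rampFollower) (x := x) hδ
      obtain rfl | rfl := Fin.exists_fin_two.1 ⟨j, rfl⟩
      · exact hj
      · exact absurd hj h
    have margin : δ ≤ x 0 + x 1 / 2 - x 2 := not_lt.1 (mt (one_mem_BRd_rampFollower hδ).2 h)
    have sum_eq_one : x 0 + x 1 + x 2 = 1 := by simpa [Fin.sum_univ_three] using hx.2
    refine ⟨0, zero_mem, ?_⟩
    rw [mixU_rampLeader_zero]
    exact le_max_of_le_right (le_min (by linarith [hx.1 0, hx.1 2]) (by linarith [hx.1 2]))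

lemma le_uRSE_ramp (hδ : 0 < δ) :
    max (1 / 2) (min 1 (2 - 2 * δ)) ≤ uRSE rampLeader rampFollower δ := by
  set t := max (1 / 2) (min 1 (2 - 2 * δ))
  have half_le : 1 / 2 ≤ t := le_max_left _ _
  have le_one : t ≤ 1 := max_le (by norm_num) (min_le_left _ _)
  have hx : ![1 - t, t, 0] ∈ simplex 3 := by
    refine ⟨Fin.forall_fin_succ.2 ⟨?_, Fin.forall_fin_two.2 ⟨?_, ?_⟩⟩, ?_⟩
    · simpa using le_one
    · simpa using one_half_pos.le.trans half_le
    · simp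
    · simp [Fin.sum_univ_three]
  refine le_uRSE hδ hx (Fin.forall_fin_two.2 ⟨fun _ => ?_, fun h => ?_⟩)
  · rw [mixU_rampLeader_zero]
    simp
  · have margin_lt : 1 - t + t / 2 < δ := by
      simpa using (one_mem_BRd_rampFollower hδ).1 h
    have min_lt : min 1 (2 - 2 * δ) < t := (min_le_right _ _).trans_lt (by linarith)
    rw [mixU_rampLeader_one hx]
    exact max_le le_rfl ((lt_max_iff.1 min_lt).resolve_right (lt_irrefl _)).le

lemma uRSE_ramp_eq (hδ : 0 < δ) :
    uRSE rampLeader rampFollower δ = max (1 / 2) (min 1 (2 - 2 * δ)) :=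
  (uRSE_ramp_le hδ).antisymm (le_uRSE_ramp hδ)

end Ramp

/-- for `m = 3` there is a game where `u_RSE` is neither convex nor
concave on `(0, Δ)`. -/
theorem uRSE_not_convex_not_concave :
    ∃ (ul uf : Fin 3 → Fin 2 → ℝ),
      (∀ i j, ul i j ∈ Set.Icc (0:ℝ) 1) ∧ (∀ i j, uf i j ∈ Set.Icc (0:ℝ) 1) ∧
      0 < indGap uf ∧
      ¬ ConvexOn ℝ (Set.Ioo 0 (indGap uf)) (uRSE ul uf) ∧
      ¬ ConcaveOn ℝ (Set.Ioo 0 (indGap uf)) (uRSE ul uf) := by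
  have mem_Ioo {δ : ℝ} (h0 : 0 < δ) (h1 : δ < 1) : δ ∈ Set.Ioo 0 (indGap rampFollower) :=
    ⟨h0, h1.trans_le one_le_indGap_rampFollower⟩
  refine ⟨rampLeader, rampFollower, rampLeader_mem_Icc, rampFollower_mem_Icc,
    one_pos.trans_le one_le_indGap_rampFollower, ?_, ?_⟩
  · apply not_convexOn_of_lt_midpoint (a := 1 / 4) (b := 3 / 4)
      (mem_Ioo (by norm_num) (by norm_num)) (mem_Ioo (by norm_num) (by norm_num))
    rw [midpoint_eq_smul_add]
    norm_num [uRSE_ramp_eq]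
  · apply not_concaveOn_of_midpoint_lt (a := 5 / 8) (b := 7 / 8)
      (mem_Ioo (by norm_num) (by norm_num)) (mem_Ioo (by norm_num) (by norm_num))
    rw [midpoint_eq_smul_add]
    norm_num [uRSE_ramp_eq]
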